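/- Let λ > 0. With V_{j,ν}^n as defined (V_{j,ν}^n = U_{j,ν}^n for 0 ≤ j ≤ ⌊(n−1)/2⌋, and for n even V_{n/2}^n(x) = q_{n/2}(2‖x‖²−1) with q_k(s) = ∫_{−1}^s P_{k−1}^{(0,d/2)}(t) dt), one has: (i) for 1 ≤ j ≤ ⌊(n−1)/2⌋, ⟨V_{j,ν}^n, V_{j,ν}^n⟩_II = ⟨U_{j,ν}^n, U_{j,ν}^n⟩_I = 2j²λ/(n+(d−2)/2); and (ii) for n even, ⟨V_{n/2}^n, V_{n/2}^n⟩_II = 8λ/(n+(d−2)/2). -/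

import Mathlib

open MeasureTheory Metric MvPolynomial RealInnerProductSpace

noncomputable section

/-- Generalized binomial coefficient `C(z, k)` for real `z`. -/
def genBinom (z : ℝ) (k : ℕ) : ℝ := (∏ i ∈ Finset.range k, (z - i)) / (Nat.factorial k)

/-- The Jacobi polynomial `P_n^{(a,b)}`, normalized so that `P_n^{(a,b)}(1) = C(n+a, n)`. -/
def jacobiPoly (n : ℕ) (a b : ℝ) : Polynomial ℝ :=
  ∑ s ∈ Finset.range (n + 1),
    Polynomial.C (genBinom ((n : ℝ) + a) (n - s) * genBinom ((n : ℝ) + b) s) *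
      (Polynomial.C (2⁻¹) * (Polynomial.X - 1)) ^ s *
      (Polynomial.C (2⁻¹) * (Polynomial.X + 1)) ^ (n - s)

/-- The Jacobi polynomial as a real function. -/
def jacobiR (n : ℕ) (a b x : ℝ) : ℝ := (jacobiPoly n a b).eval x

/-- The Laplace operator on polynomials in `d` variables. -/
def mvLaplacian {d : ℕ} (p : MvPolynomial (Fin d) ℝ) : MvPolynomial (Fin d) ℝ :=
  ∑ i : Fin d, pderiv i (pderiv i p)

/-- The polynomial `‖x‖² = x₁² + ⋯ + x_d²`. -/
def sumSq (d : ℕ) : MvPolynomial (Fin d) ℝ := ∑ i : Fin d, X i ^ 2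

/-- `σ_m`, the dimension of the space of spherical harmonics of degree `m` in `d` variables. -/
def sigmaDim (d m : ℕ) : ℕ := (m + d - 1).choose (d - 1) - (m + d - 3).choose (d - 1)

/-- The surface area `ω_d = 2 π^{d/2} / Γ(d/2)` of the unit sphere `S^{d-1}`. -/
def omegaD (d : ℕ) : ℝ := 2 * Real.pi ^ ((d : ℝ) / 2) / Real.Gamma ((d : ℝ) / 2)

/-- Euclidean space `ℝ^d`. -/
abbrev Edim (d : ℕ) := EuclideanSpace ℝ (Fin d)

/-- Evaluation of a polynomial in `d` variables at a point of `ℝ^d`. -/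
def pEval {d : ℕ} (p : MvPolynomial (Fin d) ℝ) (x : Edim d) : ℝ := eval (fun i => x i) p

/-- The surface measure `dω` on the unit sphere `S^{d-1}`. -/
def sphMeasure (d : ℕ) : Measure (sphere (0 : Edim d) 1) :=
  (volume : Measure (Edim d)).toSphere

/-- The Sobolev inner product `⟨f,g⟩_I`. -/
def innerI (d : ℕ) (lam : ℝ) (f g : Edim d → ℝ) : ℝ :=
  (lam / omegaD d) * ∫ x in closedBall (0 : Edim d) 1, ⟪gradient f x, gradient g x⟫ +
    (1 / omegaD d) * ∫ y : sphere (0 : Edim d) 1, f y * g y ∂(sphMeasure d)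

/-- The Sobolev inner product `⟨f,g⟩_II`. -/
def innerII (d : ℕ) (lam : ℝ) (f g : Edim d → ℝ) : ℝ :=
  (lam / omegaD d) * ∫ x in closedBall (0 : Edim d) 1, ⟪gradient f x, gradient g x⟫ +
    f 0 * g 0

/-- The polynomials `U_{j,ν}^n`. -/
def Upoly (d : ℕ) (Y : (m : ℕ) → Fin (sigmaDim d m) → MvPolynomial (Fin d) ℝ)
    (n j : ℕ) (ν : Fin (sigmaDim d (n - 2 * j))) : MvPolynomial (Fin d) ℝ :=
  if j = 0 then Y (n - 2 * j) ν
  else (1 - sumSq d) *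
      Polynomial.aeval (2 * sumSq d - 1)
        (jacobiPoly (j - 1) 1 ((n : ℝ) - 2 * (j : ℝ) + ((d : ℝ) - 2) / 2)) *
      Y (n - 2 * j) ν


/-- Formal antiderivative of a one-variable polynomial (vanishing at `0`). -/
def polyAntideriv (p : Polynomial ℝ) : Polynomial ℝ :=
  p.sum fun n a => Polynomial.C (a / (n + 1)) * Polynomial.X ^ (n + 1)

/-- `q_0 = 1` and, for `k ≥ 1`, the polynomial `q_k(s) = ∫_{-1}^s P_{k-1}^{(0,d/2)}(t) dt`. -/
def qPoly (d k : ℕ) : Polynomial ℝ :=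
  if k = 0 then 1
  else polyAntideriv (jacobiPoly (k - 1) 0 ((d : ℝ) / 2)) -
    Polynomial.C ((polyAntideriv (jacobiPoly (k - 1) 0 ((d : ℝ) / 2))).eval (-1))

/-- The polynomials `V_{j,ν}^n`: `V_{j,ν}^n = U_{j,ν}^n` for `j ≤ ⌊(n-1)/2⌋` and, for `n`
even, `V_{n/2}^n(x) = q_{n/2}(2‖x‖²-1)`. -/
def Vpoly (d : ℕ) (Y : (m : ℕ) → Fin (sigmaDim d m) → MvPolynomial (Fin d) ℝ)
    (n j : ℕ) (ν : Fin (sigmaDim d (n - 2 * j))) : MvPolynomial (Fin d) ℝ :=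
  if 2 * j = n then Polynomial.aeval (2 * sumSq d - 1) (qPoly d (n / 2))
  else Upoly d Y n j ν

/-! ### Jacobi polynomials -/

lemma genBinom_succ (z : ℝ) (k : ℕ) :
    genBinom z (k + 1) * ((k : ℝ) + 1) = (z - k) * genBinom z k := by
  unfold genBinom
  rw [Finset.prod_range_succ, Nat.factorial_succ]
  have : (Nat.factorial k : ℝ) ≠ 0 := by positivity
  push_cast
  field_simp

lemma genBinom_zero (z : ℝ) : genBinom z 0 = 1 := by simp [genBinom]

lemma genBinom_succ_succ (z : ℝ) (k : ℕ) :
    genBinom (z + 1) (k + 1) * ((k : ℝ) + 1) = (z + 1) * genBinom z k := by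
  unfold genBinom
  rw [Finset.prod_range_succ', Nat.factorial_succ]
  have : (Nat.factorial k : ℝ) ≠ 0 := by positivity
  have h : ∏ i ∈ Finset.range k, (z + 1 - ((i + 1 : ℕ) : ℝ)) = ∏ i ∈ Finset.range k, (z - i) :=
    Finset.prod_congr rfl fun i _ => by push_cast; ring
  rw [h]
  push_cast
  field_simp
  ring

lemma genBinom_pascal (z : ℝ) (k : ℕ) :
    genBinom (z + 1) (k + 1) = genBinom z k + genBinom z (k + 1) := by
  have h1 := genBinom_succ_succ z k
  have h2 := genBinom_succ z k
  have : ((k : ℝ) + 1) ≠ 0 := by positivity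
  apply mul_right_cancel₀ this
  linear_combination h1 - h2

lemma genBinom_shift (z : ℝ) (k : ℕ) :
    genBinom (z + 1) k * (z + 1 - k) = (z + 1) * genBinom z k := by
  linear_combination genBinom_succ_succ z k - genBinom_succ (z + 1) k

/-- Jacobi polynomial in the variable `s`, with `t = 2 s - 1`. -/
def QJ (N : ℕ) (a b s : ℝ) : ℝ := ∑ i ∈ Finset.range (N + 1),
  genBinom ((N : ℝ) + a) (N - i) * genBinom ((N : ℝ) + b) i * ((s - 1) ^ i * s ^ (N - i))

lemma jacobi_eval (N : ℕ) (a b s : ℝ) : (jacobiPoly N a b).eval (2 * s - 1) = QJ N a b s := by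
  unfold jacobiPoly QJ
  rw [Polynomial.eval_finsetSum]
  refine Finset.sum_congr rfl fun i _ => ?_
  simp only [Polynomial.eval_mul, Polynomial.eval_pow, Polynomial.eval_C, Polynomial.eval_sub,
    Polynomial.eval_add, Polynomial.eval_X, Polynomial.eval_one]
  rw [show (2⁻¹ : ℝ) * (2 * s - 1 - 1) = s - 1 by ring,
    show (2⁻¹ : ℝ) * (2 * s - 1 + 1) = s by ring]
  ring

lemma hasDerivAt_mono (i k : ℕ) (s : ℝ) :
    HasDerivAt (fun s : ℝ => (s - 1) ^ i * s ^ k)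
      ((i : ℝ) * (s - 1) ^ (i - 1) * s ^ k + (s - 1) ^ i * ((k : ℝ) * s ^ (k - 1))) s := by
  have h1 := (((hasDerivAt_id' s).sub_const 1).fun_pow i).fun_mul ((hasDerivAt_id' s).fun_pow k)
  simpa using h1

lemma QJ_deriv_raw (N : ℕ) (a b s : ℝ) : HasDerivAt (QJ N a b)
    (∑ i ∈ Finset.range (N + 1),
      genBinom ((N : ℝ) + a) (N - i) * genBinom ((N : ℝ) + b) i *
       ((i : ℝ) * (s - 1) ^ (i - 1) * s ^ (N - i) +
        (s - 1) ^ i * (((N - i : ℕ) : ℝ) * s ^ (N - i - 1)))) s := by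
  unfold QJ
  exact HasDerivAt.fun_sum fun i _ => (hasDerivAt_mono i (N - i) s).const_mul _

lemma QJ_deriv (N : ℕ) (a b s : ℝ) : HasDerivAt (QJ (N + 1) a b)
    (((N : ℝ) + a + b + 2) * QJ N (a + 1) (b + 1) s) s := by
  convert QJ_deriv_raw (N + 1) a b s using 1
  simp only [mul_add, Finset.sum_add_distrib]
  rw [Finset.sum_range_succ' _ (N + 1), Finset.sum_range_succ _ (N + 1)]
  simp only [Nat.cast_zero, zero_mul, mul_zero, add_zero, Nat.sub_self]
  unfold QJ
  rw [Finset.mul_sum, ← Finset.sum_add_distrib]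
  refine Finset.sum_congr rfl fun i hi => ?_
  have hi : i ≤ N := Nat.lt_succ_iff.mp (Finset.mem_range.mp hi)
  obtain ⟨k, rfl⟩ := Nat.exists_eq_add_of_le hi
  have e1 : i + k - i = k := by omega
  have e2 : i + k + 1 - (i + 1) = k := by omega
  have e3 : i + k + 1 - i = k + 1 := by omega
  simp only [e1, e2, e3, Nat.add_sub_cancel]
  push_cast
  have h1 := genBinom_succ ((i : ℝ) + k + 1 + b) i
  have h2 := genBinom_succ ((i : ℝ) + k + 1 + a) k
  rw [show (i : ℝ) + k + (a + 1) = i + k + 1 + a by ring,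
    show (i : ℝ) + k + (b + 1) = i + k + 1 + b by ring]
  linear_combination (-(s - 1) ^ i * s ^ k * genBinom ((i : ℝ) + k + 1 + a) k) * h1
    - (s - 1) ^ i * s ^ k * genBinom ((i : ℝ) + k + 1 + b) i * h2

lemma QJ_raise (N : ℕ) (a b s D : ℝ) (hD : HasDerivAt (QJ N (a + 1) (b + 1)) D s) :
    s * (1 - s) * D + ((b + 1) * (1 - s) - (a + 1) * s) * QJ N (a + 1) (b + 1) s
      = -((N : ℝ) + 1) * QJ (N + 1) a b s := by
  rw [hD.unique (QJ_deriv_raw N (a + 1) (b + 1) s)]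
  have hR : ((N : ℝ) + 1) * QJ (N + 1) a b s =
      (∑ i ∈ Finset.range (N + 2), genBinom (((N + 1 : ℕ) : ℝ) + a) (N + 1 - i) *
          genBinom (((N + 1 : ℕ) : ℝ) + b) i * ((s - 1) ^ i * s ^ (N + 1 - i)) * ((N : ℝ) + 1 - i)) +
      ∑ i ∈ Finset.range (N + 2), genBinom (((N + 1 : ℕ) : ℝ) + a) (N + 1 - i) *
          genBinom (((N + 1 : ℕ) : ℝ) + b) i * ((s - 1) ^ i * s ^ (N + 1 - i)) * (i : ℝ) := by
    unfold QJ
    rw [Finset.mul_sum, ← Finset.sum_add_distrib]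
    refine Finset.sum_congr rfl fun i hi => ?_
    ring
  rw [Finset.sum_range_succ, Finset.sum_range_succ' _ (N + 1)] at hR
  simp only [Nat.cast_zero, mul_zero, add_zero, Nat.cast_add, Nat.cast_one, sub_self] at hR
  rw [neg_mul, hR]
  unfold QJ
  rw [Finset.mul_sum, Finset.mul_sum, ← Finset.sum_add_distrib, ← Finset.sum_add_distrib,
    ← Finset.sum_neg_distrib]
  refine Finset.sum_congr rfl fun i hi => ?_
  have hi : i ≤ N := Nat.lt_succ_iff.mp (Finset.mem_range.mp hi)
  obtain ⟨k, rfl⟩ := Nat.exists_eq_add_of_le hi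
  have e1 : i + k - i = k := by omega
  have e2 : i + k + 1 - (i + 1) = k := by omega
  have e3 : i + k + 1 - i = k + 1 := by omega
  simp only [e1, e2, e3]
  push_cast
  have h1 := genBinom_succ ((i : ℝ) + k + 1 + b) i
  have h2 := genBinom_succ ((i : ℝ) + k + 1 + a) k
  rw [show (i : ℝ) + k + (a + 1) = i + k + 1 + a by ring,
    show (i : ℝ) + k + (b + 1) = i + k + 1 + b by ring]
  have p1 : (i : ℝ) * (s - 1) ^ (i - 1) * (s - 1) = i * (s - 1) ^ i := by
    cases i <;> simp [pow_succ, mul_assoc]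
  have p2 : (k : ℝ) * s ^ (k - 1) * s = k * s ^ k := by
    cases k <;> simp [pow_succ, mul_assoc]
  set A := genBinom ((i : ℝ) + k + 1 + a) k
  set B := genBinom ((i : ℝ) + k + 1 + b) i
  linear_combination (-A * B * s ^ (k + 1)) * p1 + A * B * (1 - s) * (s - 1) ^ i * p2
    + (s - 1) ^ (i + 1) * s ^ k * A * h1 + (s - 1) ^ i * s ^ (k + 1) * B * h2

lemma QJ_lower (N : ℕ) (b s : ℝ) : HasDerivAt (fun s => (1 - s) * QJ N 1 b s)
    (-((N : ℝ) + 1) * QJ N 0 (b + 1) s) s := by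
  have h : HasDerivAt (fun s => -∑ i ∈ Finset.range (N + 1),
      genBinom ((N : ℝ) + 1) (N - i) * genBinom ((N : ℝ) + b) i * ((s - 1) ^ (i + 1) * s ^ (N - i)))
    (-(∑ i ∈ Finset.range (N + 1),
      genBinom ((N : ℝ) + 1) (N - i) * genBinom ((N : ℝ) + b) i *
       (((i + 1 : ℕ) : ℝ) * (s - 1) ^ (i + 1 - 1) * s ^ (N - i) +
        (s - 1) ^ (i + 1) * (((N - i : ℕ) : ℝ) * s ^ (N - i - 1))))) s :=
    (HasDerivAt.fun_sum fun i _ => (hasDerivAt_mono (i + 1) (N - i) s).const_mul _).neg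
  convert h using 1
  · funext s
    unfold QJ
    rw [Finset.mul_sum, ← Finset.sum_neg_distrib]
    refine Finset.sum_congr rfl fun i hi => ?_
    ring
  · have hR : QJ N 0 (b + 1) s = (∑ i ∈ Finset.range (N + 1),
        genBinom (N : ℝ) (N - i) * genBinom ((N : ℝ) + b) i * ((s - 1) ^ i * s ^ (N - i)))
        + ∑ i ∈ Finset.range (N + 1),
        genBinom (N : ℝ) (N - i) * (if i = 0 then 0 else genBinom ((N : ℝ) + b) (i - 1)) *
          ((s - 1) ^ i * s ^ (N - i)) := by
      unfold QJ
      rw [← Finset.sum_add_distrib]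
      refine Finset.sum_congr rfl fun i hi => ?_
      rcases i with _ | i
      · simp [genBinom_zero]
      · rw [← add_assoc, genBinom_pascal]
        simp
        ring
    rw [Finset.sum_range_succ' (fun i =>
        genBinom (N : ℝ) (N - i) * (if i = 0 then 0 else genBinom ((N : ℝ) + b) (i - 1)) *
          ((s - 1) ^ i * s ^ (N - i))) N] at hR
    rw [neg_mul, hR]
    simp only [mul_add, Finset.sum_add_distrib]
    rw [Finset.sum_range_succ (fun i => genBinom ((N : ℝ) + 1) (N - i) * genBinom ((N : ℝ) + b) i *
        ((s - 1) ^ (i + 1) * (((N - i : ℕ) : ℝ) * s ^ (N - i - 1)))) N]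
    simp only [Nat.add_sub_cancel, Nat.sub_self, Nat.cast_zero, zero_mul, mul_zero, add_zero,
      Nat.add_eq_zero_iff, one_ne_zero, and_false, if_false, if_true]
    rw [Finset.mul_sum, Finset.mul_sum]
    congr 2
    · refine Finset.sum_congr rfl fun i hi => ?_
      have hi : i ≤ N := Nat.lt_succ_iff.mp (Finset.mem_range.mp hi)
      obtain ⟨k, rfl⟩ := Nat.exists_eq_add_of_le hi
      have e1 : i + k - i = k := by omega
      simp only [e1]
      have := genBinom_shift ((i : ℝ) + k) k
      push_cast
      linear_combination (-genBinom ((i : ℝ) + k + b) i * ((s - 1) ^ i * s ^ k)) * this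
    · refine Finset.sum_congr rfl fun i hi => ?_
      have hi : i + 1 ≤ N := (Finset.mem_range.mp hi)
      obtain ⟨k, rfl⟩ := Nat.exists_eq_add_of_le hi
      have e1 : i + 1 + k - (i + 1) = k := by omega
      have e2 : i + 1 + k - i = k + 1 := by omega
      simp only [e1, e2, Nat.add_sub_cancel]
      have := genBinom_succ_succ ((i : ℝ) + 1 + k) k
      push_cast
      linear_combination (-genBinom ((i : ℝ) + 1 + k + b) i * ((s - 1) ^ (i + 1) * s ^ k)) * this

lemma QJ_continuous (N : ℕ) (a b : ℝ) : Continuous (QJ N a b) := by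
  unfold QJ; fun_prop

lemma QJ_differentiable (N : ℕ) (a b : ℝ) : Differentiable ℝ (QJ N a b) := by
  unfold QJ; fun_prop

/-- Weighted norm of Jacobi polynomials in the radial variable. -/
def hJ (N a B : ℕ) : ℝ :=
  ∫ r in (0 : ℝ)..1, r ^ (B + 1) * (1 - r ^ 2) ^ a * QJ N a ((B : ℝ) / 2) (r ^ 2) ^ 2

lemma hJ_succ (N a B : ℕ) :
    ((N : ℝ) + 1) * hJ (N + 1) a B = ((N : ℝ) + a + (B : ℝ) / 2 + 2) * hJ N (a + 1) (B + 2) := by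
  set b : ℝ := (B : ℝ) / 2 with hb
  have hBb : (B : ℝ) = 2 * b := by rw [hb]; ring
  have hF : ∀ r : ℝ, HasDerivAt (fun r : ℝ => r ^ (B + 2) * (1 - r ^ 2) ^ (a + 1) *
      QJ N ((a : ℝ) + 1) (b + 1) (r ^ 2) * QJ (N + 1) a b (r ^ 2))
      (2 * ((N : ℝ) + a + b + 2) * (r ^ (B + 3) * (1 - r ^ 2) ^ (a + 1) *
          QJ N ((a : ℝ) + 1) (b + 1) (r ^ 2) ^ 2) -
        2 * ((N : ℝ) + 1) * (r ^ (B + 1) * (1 - r ^ 2) ^ a * QJ (N + 1) a b (r ^ 2) ^ 2)) r := by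
    intro r
    have hsq : HasDerivAt (fun r : ℝ => r ^ 2) (2 * r) r := by simpa using hasDerivAt_pow 2 r
    have hD := (QJ_differentiable N ((a : ℝ) + 1) (b + 1) (r ^ 2)).hasDerivAt
    have hr := QJ_raise N a b (r ^ 2) _ hD
    have hQ := HasDerivAt.comp (h := fun r : ℝ => r ^ 2) r hD hsq
    have hP := HasDerivAt.comp (h := fun r : ℝ => r ^ 2) r (QJ_deriv N a b (r ^ 2)) hsq
    have h1 := (hasDerivAt_pow (B + 2) r).fun_mul ((hsq.const_sub 1).fun_pow (a + 1))
    have h := (h1.fun_mul hQ).fun_mul hP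
    refine h.congr_deriv ?_
    simp only [Function.comp_def, Nat.add_sub_cancel, Nat.add_succ_sub_one]
    push_cast
    rw [hBb]
    set D := deriv (QJ N ((a : ℝ) + 1) (b + 1)) (r ^ 2)
    set q := QJ N ((a : ℝ) + 1) (b + 1) (r ^ 2)
    set p := QJ (N + 1) a b (r ^ 2)
    linear_combination (2 * r ^ (B + 1) * (1 - r ^ 2) ^ a * p) * hr
  have c1 := QJ_continuous N ((a : ℝ) + 1) (b + 1)
  have c2 := QJ_continuous (N + 1) a b
  have hint := intervalIntegral.integral_eq_sub_of_hasDerivAt (a := 0) (b := 1)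
    (fun r _ => hF r) (Continuous.intervalIntegrable (by fun_prop) _ _)
  rw [intervalIntegral.integral_sub (Continuous.intervalIntegrable (by fun_prop) _ _)
    (Continuous.intervalIntegrable (by fun_prop) _ _), intervalIntegral.integral_const_mul,
    intervalIntegral.integral_const_mul] at hint
  have e1 : hJ (N + 1) a B = ∫ r in (0 : ℝ)..1, r ^ (B + 1) * (1 - r ^ 2) ^ a *
    QJ (N + 1) a b (r ^ 2) ^ 2 := rfl
  have e2 : hJ N (a + 1) (B + 2) = ∫ r in (0 : ℝ)..1, r ^ (B + 3) * (1 - r ^ 2) ^ (a + 1) *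
    QJ N ((a : ℝ) + 1) (b + 1) (r ^ 2) ^ 2 := by
    unfold hJ
    rw [show (((B + 2 : ℕ) : ℝ)) / 2 = b + 1 by push_cast; rw [hb]; ring]
    push_cast
    rfl
  rw [← e1, ← e2] at hint
  simp at hint
  linarith

lemma QJ_zero (a b s : ℝ) : QJ 0 a b s = 1 := by simp [QJ, genBinom_zero]

lemma hJ_base_succ (a B : ℕ) :
    ((B : ℝ) / 2 + 1) * hJ 0 (a + 1) B = ((a : ℝ) + 1) * hJ 0 a (B + 2) := by
  simp only [hJ, QJ_zero, one_pow, mul_one]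
  have hF : ∀ r : ℝ, HasDerivAt (fun r : ℝ => r ^ (B + 2) * (1 - r ^ 2) ^ (a + 1))
      (((B : ℝ) + 2) * (r ^ (B + 1) * (1 - r ^ 2) ^ (a + 1)) -
        2 * ((a : ℝ) + 1) * (r ^ (B + 2 + 1) * (1 - r ^ 2) ^ a)) r := by
    intro r
    have hsq : HasDerivAt (fun r : ℝ => r ^ 2) (2 * r) r := by simpa using hasDerivAt_pow 2 r
    have h1 := (hasDerivAt_pow (B + 2) r).fun_mul ((hsq.const_sub 1).fun_pow (a + 1))
    refine h1.congr_deriv ?_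
    simp only [Nat.add_sub_cancel, Nat.add_succ_sub_one]
    push_cast
    ring
  have hint := intervalIntegral.integral_eq_sub_of_hasDerivAt (a := 0) (b := 1)
    (fun r _ => hF r) (Continuous.intervalIntegrable (by fun_prop) _ _)
  rw [intervalIntegral.integral_sub (Continuous.intervalIntegrable (by fun_prop) _ _)
    (Continuous.intervalIntegrable (by fun_prop) _ _), intervalIntegral.integral_const_mul,
    intervalIntegral.integral_const_mul] at hint
  simp at hint
  linarith

lemma hJ_base (a : ℕ) : ∀ B : ℕ, hJ 0 a B = (Nat.factorial a : ℝ) /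
    (2 * ((a : ℝ) + (B : ℝ) / 2 + 1) * ∏ i ∈ Finset.range a, ((B : ℝ) / 2 + 1 + i)) := by
  induction a with
  | zero =>
    intro B
    simp only [hJ, QJ_zero, one_pow, mul_one, pow_zero, integral_pow]
    simp
    field_simp
    ring
  | succ a ih =>
    intro B
    have h := hJ_base_succ a B
    rw [ih (B + 2)] at h
    have hp : ((B : ℝ) / 2 + 1) ≠ 0 := by positivity
    apply mul_left_cancel₀ hp
    rw [h, Finset.prod_range_succ', Nat.factorial_succ]
    have e : ∏ i ∈ Finset.range a, (((B + 2 : ℕ) : ℝ) / 2 + 1 + (i : ℝ)) =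
        ∏ i ∈ Finset.range a, ((B : ℝ) / 2 + 1 + ((i + 1 : ℕ) : ℝ)) :=
      Finset.prod_congr rfl fun i _ => by push_cast; ring
    rw [e]
    have hpos : 0 < ∏ i ∈ Finset.range a, ((B : ℝ) / 2 + 1 + ((i + 1 : ℕ) : ℝ)) :=
      Finset.prod_pos fun i _ => by positivity
    generalize (∏ i ∈ Finset.range a, ((B : ℝ) / 2 + 1 + ((i + 1 : ℕ) : ℝ))) = P at hpos
    push_cast
    field_simp
    ring

lemma hJ_eq (N : ℕ) : ∀ a B : ℕ, hJ N a B = ((Nat.factorial (N + a) : ℝ) / Nat.factorial N) /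
    (2 * (2 * (N : ℝ) + (a : ℝ) + (B : ℝ) / 2 + 1) *
      ∏ i ∈ Finset.range a, ((N : ℝ) + (B : ℝ) / 2 + 1 + i)) := by
  induction N with
  | zero => intro a B; rw [hJ_base]; simp
  | succ N ih =>
    intro a B
    have h := hJ_succ N a B
    rw [ih (a + 1) (B + 2)] at h
    have hp : ((N : ℝ) + 1) ≠ 0 := by positivity
    apply mul_left_cancel₀ hp
    rw [h, Finset.prod_range_succ, Nat.factorial_succ N, show N + 1 + a = N + (a + 1) by ring]
    have e : ∏ i ∈ Finset.range a, ((N : ℝ) + ((B + 2 : ℕ) : ℝ) / 2 + 1 + (i : ℝ)) =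
        ∏ i ∈ Finset.range a, (((N + 1 : ℕ) : ℝ) + (B : ℝ) / 2 + 1 + (i : ℝ)) :=
      Finset.prod_congr rfl fun i _ => by push_cast; ring
    rw [e]
    have hpos : 0 < ∏ i ∈ Finset.range a, (((N + 1 : ℕ) : ℝ) + (B : ℝ) / 2 + 1 + (i : ℝ)) :=
      Finset.prod_pos fun i _ => by positivity
    generalize (∏ i ∈ Finset.range a, (((N + 1 : ℕ) : ℝ) + (B : ℝ) / 2 + 1 + (i : ℝ))) = P at hpos
    have hf : (Nat.factorial N : ℝ) ≠ 0 := by positivity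
    generalize (Nat.factorial (N + (a + 1)) : ℝ) = G
    have q1 : (0 : ℝ) < 2 * (N : ℝ) + (a : ℝ) + (B : ℝ) / 2 + 3 := by positivity
    have q2 : (0 : ℝ) < (N : ℝ) + (a : ℝ) + (B : ℝ) / 2 + 2 := by positivity
    push_cast
    rw [show (2 * (N : ℝ) + ((a : ℝ) + 1) + ((B : ℝ) + 2) / 2 + 1) =
        2 * (N : ℝ) + (a : ℝ) + (B : ℝ) / 2 + 3 by ring,
      show (2 * ((N : ℝ) + 1) + (a : ℝ) + (B : ℝ) / 2 + 1) =
        2 * (N : ℝ) + (a : ℝ) + (B : ℝ) / 2 + 3 by ring,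
      show ((N : ℝ) + ((B : ℝ) + 2) / 2 + 1 + (a : ℝ)) = (N : ℝ) + (a : ℝ) + (B : ℝ) / 2 + 2 by ring]
    generalize 2 * (N : ℝ) + (a : ℝ) + (B : ℝ) / 2 + 3 = x at q1
    generalize (N : ℝ) + (a : ℝ) + (B : ℝ) / 2 + 2 = y at q2
    field_simp

lemma hJ_norm (N B : ℕ) :
    ∫ r in (0 : ℝ)..1, r ^ (B + 1) * QJ N 0 ((B : ℝ) / 2) (r ^ 2) ^ 2 =
      1 / (2 * (2 * (N : ℝ) + (B : ℝ) / 2 + 1)) := by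
  have h := hJ_eq N 0 B
  have hf : (Nat.factorial N : ℝ) ≠ 0 := by positivity
  simp [hJ, hf] at h
  rw [h]
  simp

/-! ### Evaluation, gradient, polar coordinates -/

lemma pEval_mul {d : ℕ} (p q : MvPolynomial (Fin d) ℝ) (x : Edim d) :
    pEval (p * q) x = pEval p x * pEval q x := by simp [pEval]

lemma pEval_add {d : ℕ} (p q : MvPolynomial (Fin d) ℝ) (x : Edim d) :
    pEval (p + q) x = pEval p x + pEval q x := by simp [pEval]

lemma pEval_sum {d : ℕ} {ι : Type*} (s : Finset ι) (p : ι → MvPolynomial (Fin d) ℝ) (x : Edim d) :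
    pEval (∑ i ∈ s, p i) x = ∑ i ∈ s, pEval (p i) x := by simp [pEval]

lemma pEval_sumSq {d : ℕ} (x : Edim d) : pEval (sumSq d) x = ‖x‖ ^ 2 := by
  simp [pEval, sumSq, EuclideanSpace.real_norm_sq_eq]

lemma pEval_aeval {d : ℕ} (F : Polynomial ℝ) (q : MvPolynomial (Fin d) ℝ) (x : Edim d) :
    pEval (Polynomial.aeval q F) x = F.eval (pEval q x) := by
  unfold pEval
  have h := Polynomial.hom_eval₂ F (algebraMap ℝ (MvPolynomial (Fin d) ℝ))
    (eval (fun i => x i)) q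
  rw [Polynomial.aeval_def, h]
  have : (eval (fun i => x i)).comp (algebraMap ℝ (MvPolynomial (Fin d) ℝ)) = RingHom.id ℝ := by
    ext; simp
  rw [this]
  rfl

lemma pEval_hasFDerivAt {d : ℕ} (p : MvPolynomial (Fin d) ℝ) (x : Edim d) :
    HasFDerivAt (pEval p)
      (∑ i, pEval (pderiv i p) x • (EuclideanSpace.proj i : Edim d →L[ℝ] ℝ)) x := by
  induction p using MvPolynomial.induction_on with
  | C a =>
    have : (pEval (C a) : Edim d → ℝ) = fun _ => a := by funext y; simp [pEval]
    rw [this]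
    simpa [pEval] using hasFDerivAt_const a x
  | add p q hp hq =>
    have : (pEval (p + q) : Edim d → ℝ) = fun y => pEval p y + pEval q y := by
      funext y; simp [pEval]
    rw [this]
    refine (hp.fun_add hq).congr_fderiv ?_
    rw [← Finset.sum_add_distrib]
    refine Finset.sum_congr rfl fun i _ => ?_
    rw [map_add, pEval_add, add_smul]
  | mul_X p j hp =>
    have : (pEval (p * X j) : Edim d → ℝ) = fun y => pEval p y * (EuclideanSpace.proj j : Edim d →L[ℝ] ℝ) y := by
      funext y; simp [pEval]
    rw [this]
    refine (hp.fun_mul (EuclideanSpace.proj j : Edim d →L[ℝ] ℝ).hasFDerivAt).congr_fderiv ?_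
    ext v
    simp [pEval, Derivation.leibniz, pderiv_X, Finset.sum_add_distrib, add_mul, Finset.mul_sum,
      Pi.single_apply, mul_assoc]
    rw [Finset.sum_eq_single j (fun b _ hb => by simp [hb.symm]) (by simp)]
    simp

lemma pEval_continuous {d : ℕ} (p : MvPolynomial (Fin d) ℝ) :
    Continuous (pEval p : Edim d → ℝ) :=
  continuous_iff_continuousAt.mpr fun x => (pEval_hasFDerivAt p x).continuousAt

lemma pEval_gradient {d : ℕ} (p : MvPolynomial (Fin d) ℝ) (x : Edim d) :
    ⟪gradient (pEval p) x, gradient (pEval p) x⟫ = pEval (∑ i, pderiv i p ^ 2) x := by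
  have h : HasGradientAt (pEval p) (WithLp.toLp 2 fun i => pEval (pderiv i p) x) x := by
    rw [hasGradientAt_iff_hasFDerivAt]
    refine (pEval_hasFDerivAt p x).congr_fderiv ?_
    ext v
    simp [PiLp.inner_apply, mul_comm]
  rw [h.gradient, pEval_sum]
  simp only [PiLp.inner_apply]
  simp [pEval, sq]

lemma pEval_smul {d m : ℕ} {p : MvPolynomial (Fin d) ℝ} (hp : p.IsHomogeneous m)
    (r : ℝ) (x : Edim d) : pEval p (r • x) = r ^ m * pEval p x := by
  unfold pEval
  simp only [MvPolynomial.eval_eq, Finset.mul_sum]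
  refine Finset.sum_congr rfl fun s hs => ?_
  have hdeg : ∑ i ∈ s.support, s i = m := by
    have := hp (MvPolynomial.mem_support_iff.mp hs)
    rw [← this, Finsupp.weight_apply]
    simp [Finsupp.sum]
  simp only [PiLp.smul_apply, smul_eq_mul, mul_pow, Finset.prod_mul_distrib,
    Finset.prod_pow_eq_pow_sum]
  rw [← hdeg]
  ring

lemma polar {d m : ℕ} (hd : 2 ≤ d) {p : MvPolynomial (Fin d) ℝ} (hp : p.IsHomogeneous m)
    (g : ℝ → ℝ) :
    ∫ x : Edim d, g ‖x‖ * pEval p x =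
      (∫ r in Set.Ioi (0 : ℝ), g r * r ^ (m + d - 1)) *
        ∫ y : sphere (0 : Edim d) 1, pEval p y ∂(sphMeasure d) := by
  have hfin : Module.finrank ℝ (Edim d) = d := by simp
  have hnt : Nontrivial (Edim d) := Module.nontrivial_of_finrank_pos (R := ℝ) (by omega)
  calc
    ∫ x : Edim d, g ‖x‖ * pEval p x
      = ∫ x : ({(0)}ᶜ : Set (Edim d)), g ‖x.1‖ * pEval p x.1 ∂((volume : Measure (Edim d)).comap Subtype.val) := by
        rw [integral_subtype_comap (measurableSet_singleton _).compl
          fun x : Edim d ↦ g ‖x‖ * pEval p x, restrict_compl_singleton]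
    _ = ∫ z, pEval p (z.1 : Edim d) * (g z.2.1 * z.2.1 ^ m)
        ∂(volume : Measure (Edim d)).toSphere.prod (.volumeIoiPow (d - 1)) := by
      have h := (volume : Measure (Edim d)).measurePreserving_homeomorphUnitSphereProd.integral_comp
        (Homeomorph.measurableEmbedding _)
        (fun z => pEval p (z.1 : Edim d) * (g z.2.1 * z.2.1 ^ m))
      rw [hfin] at h
      rw [← h]
      refine integral_congr_ae (Filter.Eventually.of_forall fun x => ?_)
      have hx : ‖(x : Edim d)‖ ≠ 0 := norm_ne_zero_iff.mpr x.2
      simp only [homeomorphUnitSphereProd_apply_snd_coe, homeomorphUnitSphereProd_apply_fst_coe]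
      rw [pEval_smul hp]
      rw [inv_pow]
      field_simp
    _ = (∫ y : sphere (0 : Edim d) 1, pEval p y ∂(sphMeasure d)) *
        ∫ r : Set.Ioi (0 : ℝ), g r * r.1 ^ m ∂(.volumeIoiPow (d - 1)) :=
      integral_prod_mul (fun y : sphere (0 : Edim d) 1 => pEval p (y : Edim d))
        (fun r : Set.Ioi (0 : ℝ) => g r * r.1 ^ m)
    _ = _ := by
      rw [mul_comm]
      congr 1
      simp only [Measure.volumeIoiPow, ENNReal.ofReal]
      rw [integral_withDensity_eq_integral_smul,
        integral_subtype_comap measurableSet_Ioi fun a ↦ Real.toNNReal (a ^ (d - 1)) • (g a * a ^ m),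
        setIntegral_congr_fun measurableSet_Ioi fun x hx ↦ ?_]
      · rw [NNReal.smul_def, Real.coe_toNNReal _ (pow_nonneg hx.out.le _),
          show m + d - 1 = m + (d - 1) by omega, pow_add, smul_eq_mul]
        ring
      · exact (measurable_subtype_coe.pow_const _).real_toNNReal

lemma polar_ball {d m : ℕ} (hd : 2 ≤ d) {p : MvPolynomial (Fin d) ℝ} (hp : p.IsHomogeneous m)
    (g : ℝ → ℝ) :
    ∫ x in closedBall (0 : Edim d) 1, g ‖x‖ * pEval p x =
      (∫ r in (0 : ℝ)..1, g r * r ^ (m + d - 1)) *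
        ∫ y : sphere (0 : Edim d) 1, pEval p y ∂(sphMeasure d) := by
  have h := polar hd hp ((Set.Iic 1).indicator g)
  have e1 : ∫ x in closedBall (0 : Edim d) 1, g ‖x‖ * pEval p x =
      ∫ x : Edim d, (Set.Iic 1).indicator g ‖x‖ * pEval p x := by
    rw [← integral_indicator measurableSet_closedBall]
    congr 1
    funext x
    by_cases hx : ‖x‖ ≤ 1 <;> simp [Set.indicator, hx]
  have e2 : ∫ r in (0 : ℝ)..1, g r * r ^ (m + d - 1) =
      ∫ r in Set.Ioi (0 : ℝ), (Set.Iic 1).indicator g r * r ^ (m + d - 1) := by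
    rw [intervalIntegral.integral_of_le zero_le_one, ← integral_indicator measurableSet_Ioc,
      ← integral_indicator measurableSet_Ioi]
    congr 1
    funext r
    by_cases h0 : 0 < r <;> by_cases h1 : r ≤ 1 <;> simp [Set.indicator, h0, h1]
  rw [e1, e2, h]

lemma sph_total {d : ℕ} (hd : 2 ≤ d) :
    ∫ _y : sphere (0 : Edim d) 1, (1 : ℝ) ∂(sphMeasure d) = omegaD d := by
  have hfin : Module.finrank ℝ (Edim d) = d := by simp
  have : Nonempty (Fin d) := ⟨⟨0, by omega⟩⟩
  have hd0 : (0 : ℝ) < d := by exact_mod_cast (by omega : 0 < d)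
  rw [integral_const, smul_eq_mul, mul_one]
  unfold sphMeasure omegaD
  rw [Measure.toSphere_real_apply_univ, hfin, measureReal_def, EuclideanSpace.volume_ball]
  have hg : 0 < Real.Gamma ((d : ℝ) / 2) := Real.Gamma_pos_of_pos (by positivity)
  have hs : Real.Gamma ((d : ℝ) / 2 + 1) = (d : ℝ) / 2 * Real.Gamma ((d : ℝ) / 2) :=
    Real.Gamma_add_one (by positivity)
  have hpi : Real.sqrt Real.pi ^ d = Real.pi ^ ((d : ℝ) / 2) := by
    rw [Real.sqrt_eq_rpow, ← Real.rpow_natCast, ← Real.rpow_mul Real.pi_pos.le]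
    congr 1
    ring
  simp only [ENNReal.ofReal_one, one_pow, one_mul, Fintype.card_fin]
  rw [ENNReal.toReal_ofReal (by rw [hs]; positivity), hs, hpi]
  field_simp

lemma omegaD_pos {d : ℕ} (hd : 2 ≤ d) : 0 < omegaD d := by
  have hd0 : (0 : ℝ) < d := by exact_mod_cast (by omega : 0 < d)
  have hg : 0 < Real.Gamma ((d : ℝ) / 2) := Real.Gamma_pos_of_pos (by positivity)
  unfold omegaD
  have := Real.pi_pos
  positivity

/-! ### The divergence identity on the sphere -/

/-- A smooth cutoff function. -/
def cutoff (s : ℝ) : ℝ := Real.smoothTransition (2 - s)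

lemma cutoff_contDiff : ContDiff ℝ 1 cutoff := by
  unfold cutoff
  exact Real.smoothTransition.contDiff.comp (contDiff_const.sub contDiff_id)

lemma cutoff_zero {s : ℝ} (hs : 2 ≤ s) : cutoff s = 0 :=
  Real.smoothTransition.zero_of_nonpos (by linarith)

lemma cutoff_one {s : ℝ} (hs : s ≤ 1) : cutoff s = 1 :=
  Real.smoothTransition.one_of_one_le (by linarith)

lemma cutoff_nonneg (s : ℝ) : 0 ≤ cutoff s := Real.smoothTransition.nonneg _

lemma cutoff_deriv_zero {s : ℝ} (hs : 2 < s) : deriv cutoff s = 0 := by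
  have : cutoff =ᶠ[nhds s] fun _ => 0 := by
    filter_upwards [lt_mem_nhds hs] with t ht using cutoff_zero ht.le
  rw [this.deriv_eq]
  simp

lemma cutoff_deriv_continuous : Continuous (deriv cutoff) :=
  cutoff_contDiff.continuous_deriv le_rfl

lemma cutoff_continuous : Continuous cutoff := cutoff_contDiff.continuous

lemma integrable_mul_radial {d : ℕ} (p : MvPolynomial (Fin d) ℝ) {g : ℝ → ℝ} (hg : Continuous g)
    (h0 : ∀ s, 2 < s → g s = 0) : Integrable (fun x : Edim d => pEval p x * g (‖x‖ ^ 2)) := by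
  have := pEval_continuous p
  refine Continuous.integrable_of_hasCompactSupport (by fun_prop) ?_
  refine HasCompactSupport.intro (isCompact_closedBall (0 : Edim d) 2) fun x hx => ?_
  rw [mem_closedBall_zero_iff, not_le] at hx
  rw [h0 _ (by nlinarith), mul_zero]

lemma cutoff_fderiv {d : ℕ} (x : Edim d) : HasFDerivAt (fun x : Edim d => cutoff (‖x‖ ^ 2))
    (deriv cutoff (‖x‖ ^ 2) •
      ∑ i, pEval (pderiv i (sumSq d)) x • (EuclideanSpace.proj i : Edim d →L[ℝ] ℝ)) x := by
  have h1 := pEval_hasFDerivAt (sumSq d) x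
  have h2 := (cutoff_contDiff.differentiable one_ne_zero (pEval (sumSq d) x)).hasDerivAt
  have h3 := h2.comp_hasFDerivAt x h1
  rw [pEval_sumSq] at h3
  refine h3.congr_of_eventuallyEq (Filter.Eventually.of_forall fun y => ?_)
  simp [pEval_sumSq]

lemma pderiv_sumSq {d : ℕ} (i : Fin d) : pderiv i (sumSq d) = 2 * X i := by
  unfold sumSq
  rw [map_sum, Finset.sum_eq_single i]
  · simp [Derivation.leibniz_pow]
  · intro b _ hb
    simp [Derivation.leibniz_pow, pderiv_X_of_ne hb]
  · simp

lemma ibp {d : ℕ} (f : MvPolynomial (Fin d) ℝ) (i : Fin d) :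
    ∫ x : Edim d, pEval (2 * (X i * f)) x * deriv cutoff (‖x‖ ^ 2) =
      - ∫ x : Edim d, pEval (pderiv i f) x * cutoff (‖x‖ ^ 2) := by
  have e1 : ∀ x : Edim d, fderiv ℝ (pEval f) x (EuclideanSpace.single i 1) =
      pEval (pderiv i f) x := by
    intro x
    rw [(pEval_hasFDerivAt f x).fderiv]
    simp
  have e2 : ∀ x : Edim d, pEval f x *
      fderiv ℝ (fun x : Edim d => cutoff (‖x‖ ^ 2)) x (EuclideanSpace.single i 1) =
      pEval (2 * (X i * f)) x * deriv cutoff (‖x‖ ^ 2) := by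
    intro x
    rw [(cutoff_fderiv x).fderiv]
    simp only [pderiv_sumSq]
    simp [pEval]
    ring
  have h := integral_mul_fderiv_eq_neg_fderiv_mul_of_integrable (μ := volume) (f := pEval f)
    (g := fun x : Edim d => cutoff (‖x‖ ^ 2)) (v := EuclideanSpace.single i 1)
    (by simp only [e1]
        exact integrable_mul_radial _ cutoff_continuous fun s hs => cutoff_zero hs.le)
    (by simp only [e2]
        exact integrable_mul_radial _ cutoff_deriv_continuous fun s hs => cutoff_deriv_zero hs)
    (integrable_mul_radial _ cutoff_continuous fun s hs => cutoff_zero hs.le)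
    (fun x _ => (pEval_hasFDerivAt f x).differentiableAt)
    (fun x _ => (cutoff_fderiv x).differentiableAt)
  simp only [e1, e2] at h
  exact h

lemma cutoff_compact (k : ℕ) {g : ℝ → ℝ} (h0 : ∀ s, 2 < s → g s = 0) :
    HasCompactSupport (fun r : ℝ => g (r ^ 2) * r ^ k) := by
  refine HasCompactSupport.intro (isCompact_closedBall (0 : ℝ) 2) fun x hx => ?_
  rw [mem_closedBall_zero_iff, not_le, Real.norm_eq_abs] at hx
  rw [h0 _ (by nlinarith [sq_abs x]), zero_mul]

lemma cutoff_oneD (k : ℕ) :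
    2 * ∫ r in Set.Ioi (0 : ℝ), deriv cutoff (r ^ 2) * r ^ (k + 2) =
      -((k : ℝ) + 1) * ∫ r in Set.Ioi (0 : ℝ), cutoff (r ^ 2) * r ^ k := by
  have hc := cutoff_contDiff
  have hcd := cutoff_deriv_continuous
  have hcc := cutoff_continuous
  have h := HasCompactSupport.integral_Ioi_deriv_eq (f := fun r : ℝ => cutoff (r ^ 2) * r ^ (k + 1))
    (by fun_prop) (cutoff_compact (k + 1) fun s hs => cutoff_zero hs.le) 0
  have hd : ∀ r : ℝ, deriv (fun r : ℝ => cutoff (r ^ 2) * r ^ (k + 1)) r =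
      2 * (deriv cutoff (r ^ 2) * r ^ (k + 2)) + ((k : ℝ) + 1) * (cutoff (r ^ 2) * r ^ k) := by
    intro r
    have hsq : HasDerivAt (fun r : ℝ => r ^ 2) (2 * r) r := by simpa using hasDerivAt_pow 2 r
    have h1 := HasDerivAt.comp (h := fun r : ℝ => r ^ 2) r
      (hc.differentiable one_ne_zero (r ^ 2)).hasDerivAt hsq
    have h2 := h1.fun_mul (hasDerivAt_pow (k + 1) r)
    have h3 := h2.deriv
    simp only [Function.comp_def] at h3
    rw [h3, Nat.add_sub_cancel]
    push_cast
    ring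
  have i1 : IntegrableOn (fun r : ℝ => deriv cutoff (r ^ 2) * r ^ (k + 2)) (Set.Ioi 0) :=
    (Continuous.integrable_of_hasCompactSupport (by fun_prop)
      (cutoff_compact _ fun s hs => cutoff_deriv_zero hs)).integrableOn
  have i2 : IntegrableOn (fun r : ℝ => cutoff (r ^ 2) * r ^ k) (Set.Ioi 0) :=
    (Continuous.integrable_of_hasCompactSupport (by fun_prop)
      (cutoff_compact _ fun s hs => cutoff_zero hs.le)).integrableOn
  simp only [hd] at h
  rw [integral_add (i1.const_mul _) (i2.const_mul _), integral_const_mul, integral_const_mul] at h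
  simp at h
  linarith

lemma cutoff_pos (k : ℕ) : 0 < ∫ r in Set.Ioi (0 : ℝ), cutoff (r ^ 2) * r ^ k := by
  have hcc := cutoff_continuous
  have i2 : IntegrableOn (fun r : ℝ => cutoff (r ^ 2) * r ^ k) (Set.Ioi 0) :=
    (Continuous.integrable_of_hasCompactSupport (by fun_prop)
      (cutoff_compact _ fun s hs => cutoff_zero hs.le)).integrableOn
  have h1 : ∫ r in Set.Ioc (0 : ℝ) 1, cutoff (r ^ 2) * r ^ k ≤
      ∫ r in Set.Ioi (0 : ℝ), cutoff (r ^ 2) * r ^ k := by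
    refine setIntegral_mono_set i2 ?_ (Filter.Eventually.of_forall Set.Ioc_subset_Ioi_self)
    filter_upwards [ae_restrict_mem measurableSet_Ioi] with r hr
    exact mul_nonneg (cutoff_nonneg _) (pow_nonneg (le_of_lt hr) _)
  have h2 : ∫ r in Set.Ioc (0 : ℝ) 1, cutoff (r ^ 2) * r ^ k = 1 / ((k : ℝ) + 1) := by
    rw [setIntegral_congr_fun (g := fun r : ℝ => r ^ k) measurableSet_Ioc fun r hr => ?_]
    · rw [← intervalIntegral.integral_of_le zero_le_one, integral_pow]
      simp
    · rw [cutoff_one (by nlinarith [hr.1, hr.2]), one_mul]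
  refine lt_of_lt_of_le ?_ h1
  rw [h2]
  positivity

lemma lap_sq {d : ℕ} {Y : MvPolynomial (Fin d) ℝ} (hY : mvLaplacian Y = 0) :
    mvLaplacian (Y ^ 2) = 2 * ∑ i, pderiv i Y ^ 2 := by
  have : mvLaplacian (Y ^ 2) = 2 * Y * mvLaplacian Y + 2 * ∑ i, pderiv i Y ^ 2 := by
    unfold mvLaplacian
    rw [Finset.mul_sum, Finset.mul_sum, ← Finset.sum_add_distrib]
    refine Finset.sum_congr rfl fun i _ => ?_
    rw [sq, Derivation.leibniz]
    simp only [smul_eq_mul, map_add, Derivation.leibniz]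
    ring
  rw [this, hY]
  ring

lemma grad_hom {d m : ℕ} {Y : MvPolynomial (Fin d) ℝ} (hY : Y.IsHomogeneous m) :
    (∑ i, pderiv i Y ^ 2).IsHomogeneous (2 * (m - 1)) := by
  refine MvPolynomial.IsHomogeneous.sum _ _ _ fun i _ => ?_
  rw [mul_comm]
  exact (hY.pderiv).pow 2

lemma sph_grad {d m : ℕ} (hd : 2 ≤ d) (hm : 1 ≤ m) {Y : MvPolynomial (Fin d) ℝ}
    (hY : Y.IsHomogeneous m) (hL : mvLaplacian Y = 0) :
    ∫ y : sphere (0 : Edim d) 1, pEval (∑ i, pderiv i Y ^ 2) y ∂(sphMeasure d) =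
      (m : ℝ) * (2 * m + d - 2) *
        ∫ y : sphere (0 : Edim d) 1, pEval (Y ^ 2) y ∂(sphMeasure d) := by
  have hY2 : (Y ^ 2).IsHomogeneous (2 * m) := by rw [mul_comm]; exact hY.pow 2
  have hsum : ∑ i, ∫ x : Edim d, pEval (2 * (X i * pderiv i (Y ^ 2))) x * deriv cutoff (‖x‖ ^ 2) =
      - ∑ i, ∫ x : Edim d, pEval (pderiv i (pderiv i (Y ^ 2))) x * cutoff (‖x‖ ^ 2) := by
    rw [← Finset.sum_neg_distrib]
    exact Finset.sum_congr rfl fun i _ => ibp _ i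
  rw [← integral_finsetSum _ fun i _ => integrable_mul_radial _ cutoff_deriv_continuous
      fun s hs => cutoff_deriv_zero hs,
    ← integral_finsetSum _ fun i _ => integrable_mul_radial _ cutoff_continuous
      fun s hs => cutoff_zero hs.le] at hsum
  simp only [← Finset.sum_mul, ← pEval_sum] at hsum
  rw [show (∑ i, pderiv i (pderiv i (Y ^ 2))) = mvLaplacian (Y ^ 2) from rfl, lap_sq hL,
    ← Finset.mul_sum, hY2.sum_X_mul_pderiv] at hsum
  have e1 : ∀ x : Edim d, pEval (2 * ((2 * m) • Y ^ 2)) x * deriv cutoff (‖x‖ ^ 2) =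
      (4 * m) * ((fun r => deriv cutoff (r ^ 2)) ‖x‖ * pEval (Y ^ 2) x) := by
    intro x
    simp [pEval]
    ring
  have e2 : ∀ x : Edim d, pEval (2 * ∑ i, pderiv i Y ^ 2) x * cutoff (‖x‖ ^ 2) =
      2 * ((fun r => cutoff (r ^ 2)) ‖x‖ * pEval (∑ i, pderiv i Y ^ 2) x) := by
    intro x
    rw [pEval_mul]
    simp [pEval]
    ring
  simp only [e1, e2] at hsum
  rw [integral_const_mul, integral_const_mul, polar hd hY2 (fun r => deriv cutoff (r ^ 2)),
    polar hd (grad_hom hY) (fun r => cutoff (r ^ 2))] at hsum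
  obtain ⟨k, hk⟩ : ∃ k, 2 * m + d - 1 = k + 2 := ⟨2 * m + d - 3, by omega⟩
  have hk2 : 2 * (m - 1) + d - 1 = k := by omega
  have hkr : (2 * (m : ℝ) + d - 2) = k + 1 := by
    have : 2 * m + d = k + 3 := by omega
    have : (2 * (m : ℝ) + d) = k + 3 := by exact_mod_cast this
    linarith
  rw [hk, hk2] at hsum
  rw [hkr]
  have h1 := cutoff_oneD k
  have h2 := cutoff_pos k
  apply mul_left_cancel₀ h2.ne'
  generalize (∫ y : sphere (0 : Edim d) 1, pEval (Y ^ 2) y ∂(sphMeasure d)) = S at *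
  linear_combination (1 / 2) * hsum - m * S * h1

/-! ### Energy of radial times harmonic polynomials -/

lemma grad_formula {d m : ℕ} (F : Polynomial ℝ) {Y : MvPolynomial (Fin d) ℝ}
    (hY : Y.IsHomogeneous m) (x : Edim d) :
    pEval (∑ i, pderiv i (Polynomial.aeval (sumSq d) F * Y) ^ 2) x =
      (4 * ‖x‖ ^ 2 * (F.derivative.eval (‖x‖ ^ 2)) ^ 2 +
        4 * m * F.eval (‖x‖ ^ 2) * F.derivative.eval (‖x‖ ^ 2)) * pEval (Y ^ 2) x +
      F.eval (‖x‖ ^ 2) ^ 2 * pEval (∑ i, pderiv i Y ^ 2) x := by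
  have key : ∑ i, pderiv i (Polynomial.aeval (sumSq d) F * Y) ^ 2 =
      4 * sumSq d * Polynomial.aeval (sumSq d) F.derivative ^ 2 * Y ^ 2 +
      4 * Polynomial.aeval (sumSq d) F * Polynomial.aeval (sumSq d) F.derivative * Y *
        (∑ i, X i * pderiv i Y) +
      Polynomial.aeval (sumSq d) F ^ 2 * ∑ i, pderiv i Y ^ 2 := by
    have hs : 4 * sumSq d * Polynomial.aeval (sumSq d) F.derivative ^ 2 * Y ^ 2 =
        ∑ i, 4 * X i ^ 2 * Polynomial.aeval (sumSq d) F.derivative ^ 2 * Y ^ 2 := by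
      rw [← Finset.sum_mul, ← Finset.sum_mul, ← Finset.mul_sum]
      rfl
    rw [hs, Finset.mul_sum, Finset.mul_sum, ← Finset.sum_add_distrib, ← Finset.sum_add_distrib]
    refine Finset.sum_congr rfl fun i _ => ?_
    rw [Derivation.leibniz, Derivation.map_aeval, pderiv_sumSq]
    simp only [smul_eq_mul]
    ring
  rw [key, hY.sum_X_mul_pderiv]
  simp only [pEval_add, pEval_mul, sq (Polynomial.aeval (sumSq d) F),
    sq (Polynomial.aeval (sumSq d) F.derivative), sq Y, pEval_aeval, pEval_sumSq]
  have h4 : pEval (4 : MvPolynomial (Fin d) ℝ) x = 4 := by simp [pEval]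
  have hm : pEval (m • Y) x = m * pEval Y x := by simp [pEval]
  rw [h4, hm]
  ring

lemma energy {d m : ℕ} (hd : 2 ≤ d) (F : Polynomial ℝ) {Y : MvPolynomial (Fin d) ℝ}
    (hY : Y.IsHomogeneous m) :
    ∫ x in closedBall (0 : Edim d) 1,
      ⟪gradient (pEval (Polynomial.aeval (sumSq d) F * Y)) x,
        gradient (pEval (Polynomial.aeval (sumSq d) F * Y)) x⟫ =
    (∫ r in (0 : ℝ)..1, (4 * r ^ 2 * (F.derivative.eval (r ^ 2)) ^ 2 +
        4 * m * F.eval (r ^ 2) * F.derivative.eval (r ^ 2)) * r ^ (2 * m + d - 1)) *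
      (∫ y : sphere (0 : Edim d) 1, pEval (Y ^ 2) y ∂(sphMeasure d)) +
    (∫ r in (0 : ℝ)..1, F.eval (r ^ 2) ^ 2 * r ^ (2 * (m - 1) + d - 1)) *
      ∫ y : sphere (0 : Edim d) 1, pEval (∑ i, pderiv i Y ^ 2) y ∂(sphMeasure d) := by
  have hY2 : (Y ^ 2).IsHomogeneous (2 * m) := by rw [mul_comm]; exact hY.pow 2
  simp only [pEval_gradient, grad_formula F hY]
  have c1 := pEval_continuous (Y ^ 2)
  have c2 := pEval_continuous (∑ i, pderiv i Y ^ 2)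
  have c3 : Continuous fun s : ℝ => F.eval s := F.continuous
  have c4 : Continuous fun s : ℝ => F.derivative.eval s := F.derivative.continuous
  have c5 : Continuous fun x : Edim d => F.eval (‖x‖ ^ 2) := c3.comp (by fun_prop)
  have c6 : Continuous fun x : Edim d => F.derivative.eval (‖x‖ ^ 2) := c4.comp (by fun_prop)
  rw [integral_add
    (ContinuousOn.integrableOn_compact (isCompact_closedBall _ _)
      (Continuous.continuousOn (by fun_prop)))
    (ContinuousOn.integrableOn_compact (isCompact_closedBall _ _)
      (Continuous.continuousOn (by fun_prop)))]
  rw [polar_ball hd hY2 (fun r => 4 * r ^ 2 * (F.derivative.eval (r ^ 2)) ^ 2 +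
        4 * m * F.eval (r ^ 2) * F.derivative.eval (r ^ 2)),
    polar_ball hd (grad_hom hY) (fun r => F.eval (r ^ 2) ^ 2)]

lemma radial_ibp (m k : ℕ) (F : Polynomial ℝ) (hF : F.eval 1 = 0) :
    (∫ r in (0 : ℝ)..1, (4 * r ^ 2 * (F.derivative.eval (r ^ 2)) ^ 2 +
        4 * m * F.eval (r ^ 2) * F.derivative.eval (r ^ 2)) * r ^ (k + 2)) +
    (∫ r in (0 : ℝ)..1, F.eval (r ^ 2) ^ 2 * r ^ k) * (m * ((k : ℝ) + 1)) =
    4 * ∫ r in (0 : ℝ)..1, r ^ (k + 4) * (F.derivative.eval (r ^ 2)) ^ 2 := by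
  have c3 : Continuous fun s : ℝ => F.eval s := F.continuous
  have c4 : Continuous fun s : ℝ => F.derivative.eval s := F.derivative.continuous
  have c5 : Continuous fun r : ℝ => F.eval (r ^ 2) := c3.comp (by fun_prop)
  have c6 : Continuous fun r : ℝ => F.derivative.eval (r ^ 2) := c4.comp (by fun_prop)
  have hG : ∀ r : ℝ, HasDerivAt (fun r : ℝ => (m : ℝ) * (F.eval (r ^ 2) ^ 2 * r ^ (k + 1)))
      ((4 * r ^ 2 * (F.derivative.eval (r ^ 2)) ^ 2 +
        4 * m * F.eval (r ^ 2) * F.derivative.eval (r ^ 2)) * r ^ (k + 2) +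
        F.eval (r ^ 2) ^ 2 * r ^ k * (m * ((k : ℝ) + 1)) -
        4 * (r ^ (k + 4) * (F.derivative.eval (r ^ 2)) ^ 2)) r := by
    intro r
    have hsq : HasDerivAt (fun r : ℝ => r ^ 2) (2 * r) r := by simpa using hasDerivAt_pow 2 r
    have h1 := HasDerivAt.comp (h := fun r : ℝ => r ^ 2) r (F.hasDerivAt (r ^ 2)) hsq
    have h2 := ((h1.fun_pow 2).fun_mul (hasDerivAt_pow (k + 1) r)).const_mul (m : ℝ)
    refine h2.congr_deriv ?_
    simp only [Function.comp_def, Nat.add_sub_cancel]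
    push_cast
    ring
  have hint := intervalIntegral.integral_eq_sub_of_hasDerivAt (a := 0) (b := 1)
    (fun r _ => hG r) (Continuous.intervalIntegrable (by fun_prop) _ _)
  rw [intervalIntegral.integral_sub (Continuous.intervalIntegrable (by fun_prop) _ _)
    (Continuous.intervalIntegrable (by fun_prop) _ _),
    intervalIntegral.integral_add (Continuous.intervalIntegrable (by fun_prop) _ _)
    (Continuous.intervalIntegrable (by fun_prop) _ _), intervalIntegral.integral_const_mul,
    intervalIntegral.integral_mul_const] at hint
  simp only [one_pow, hF, zero_pow (Nat.succ_ne_zero _)] at hint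
  linarith

/-- The radial factor of `U`. -/
def radU (N : ℕ) (b : ℝ) : Polynomial ℝ :=
  (1 - Polynomial.X) * (jacobiPoly N 1 b).comp (2 * Polynomial.X - 1)

lemma radU_eval (N : ℕ) (b s : ℝ) : (radU N b).eval s = (1 - s) * QJ N 1 b s := by
  rw [← jacobi_eval]
  simp [radU]

lemma radU_deriv (N : ℕ) (b s : ℝ) :
    (radU N b).derivative.eval s = -((N : ℝ) + 1) * QJ N 0 (b + 1) s := by
  refine ((radU N b).hasDerivAt s).unique ?_
  have : (fun s => (radU N b).eval s) = fun s => (1 - s) * QJ N 1 b s := by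
    funext s; exact radU_eval N b s
  rw [this]
  exact QJ_lower N b s

lemma Upoly_eq (d : ℕ) (Y : (m : ℕ) → Fin (sigmaDim d m) → MvPolynomial (Fin d) ℝ)
    (n N : ℕ) (ν : Fin (sigmaDim d (n - 2 * (N + 1)))) :
    Upoly d Y n (N + 1) ν = Polynomial.aeval (sumSq d)
      (radU N ((n : ℝ) - 2 * ((N + 1 : ℕ) : ℝ) + ((d : ℝ) - 2) / 2)) * Y (n - 2 * (N + 1)) ν := by
  have h2 : Polynomial.aeval (sumSq d) (2 : Polynomial ℝ) = 2 := map_ofNat _ 2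
  simp [Upoly, radU, Polynomial.aeval_comp, h2]

lemma energyU {d m N : ℕ} (hd : 2 ≤ d) (hm : 1 ≤ m) {Y : MvPolynomial (Fin d) ℝ}
    (hY : Y.IsHomogeneous m) (hL : mvLaplacian Y = 0)
    (hon : ∫ y : sphere (0 : Edim d) 1, pEval (Y ^ 2) y ∂(sphMeasure d) = omegaD d)
    (b : ℝ) (hb : b = m + ((d : ℝ) - 2) / 2) :
    ∫ x in closedBall (0 : Edim d) 1,
      ⟪gradient (pEval (Polynomial.aeval (sumSq d) (radU N b) * Y)) x,
        gradient (pEval (Polynomial.aeval (sumSq d) (radU N b) * Y)) x⟫ =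
    2 * ((N : ℝ) + 1) ^ 2 / (2 * N + m + 1 + (d : ℝ) / 2) * omegaD d := by
  rw [energy hd _ hY, sph_grad hd hm hY hL, hon]
  obtain ⟨k, hk⟩ : ∃ k, 2 * m + d - 1 = k + 2 := ⟨2 * m + d - 3, by omega⟩
  have hk2 : 2 * (m - 1) + d - 1 = k := by omega
  have hkr : (2 * (m : ℝ) + d - 2) = k + 1 := by
    have : 2 * m + d = k + 3 := by omega
    have : (2 * (m : ℝ) + d) = k + 3 := by exact_mod_cast this
    linarith
  have h1 := radial_ibp m k (radU N b) (by rw [radU_eval]; ring)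
  have h2 := hJ_norm N (k + 3)
  have hB : ((k + 3 : ℕ) : ℝ) / 2 = b + 1 := by push_cast; rw [hb]; linarith
  have h3 : ∫ r in (0 : ℝ)..1, r ^ (k + 4) * ((radU N b).derivative.eval (r ^ 2)) ^ 2 =
      ((N : ℝ) + 1) ^ 2 * ∫ r in (0 : ℝ)..1, r ^ (k + 4) * QJ N 0 (b + 1) (r ^ 2) ^ 2 := by
    rw [← intervalIntegral.integral_const_mul]
    congr 1
    funext r
    rw [radU_deriv]
    ring
  rw [hB] at h2
  rw [h3, h2] at h1
  rw [hk, hk2, hkr]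
  have hden : (0 : ℝ) < 2 * N + m + 1 + (d : ℝ) / 2 := by positivity
  have : 2 * (N : ℝ) + (b + 1) + 1 = 2 * N + m + 1 + (d : ℝ) / 2 := by rw [hb]; ring
  rw [this] at h1
  have h4 : 4 * (((N : ℝ) + 1) ^ 2 * (1 / (2 * (2 * N + m + 1 + (d : ℝ) / 2)))) =
    2 * ((N : ℝ) + 1) ^ 2 / (2 * N + m + 1 + (d : ℝ) / 2) := by
    field_simp
    ring
  rw [h4] at h1
  rw [← h1]
  ring

lemma polyAntideriv_deriv (p : Polynomial ℝ) : (polyAntideriv p).derivative = p := by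
  unfold polyAntideriv
  conv_rhs => rw [← Polynomial.sum_C_mul_X_pow_eq p]
  unfold Polynomial.sum
  rw [Polynomial.derivative_sum]
  refine Finset.sum_congr rfl fun n _ => ?_
  rw [Polynomial.derivative_C_mul_X_pow]
  have : ((n : ℝ) + 1) ≠ 0 := by positivity
  simp [this]

lemma energyV {d N : ℕ} (hd : 2 ≤ d) :
    ∫ x in closedBall (0 : Edim d) 1,
      ⟪gradient (pEval (Polynomial.aeval (2 * sumSq d - 1) (qPoly d (N + 1)))) x,
        gradient (pEval (Polynomial.aeval (2 * sumSq d - 1) (qPoly d (N + 1)))) x⟫ =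
    8 / (2 * N + 1 + (d : ℝ) / 2) * omegaD d := by
  set F : Polynomial ℝ := (qPoly d (N + 1)).comp (2 * Polynomial.X - 1) with hF
  have e : Polynomial.aeval (2 * sumSq d - 1) (qPoly d (N + 1)) =
      Polynomial.aeval (sumSq d) F * 1 := by
    have h2 : Polynomial.aeval (sumSq d) (2 : Polynomial ℝ) = 2 := map_ofNat _ 2
    simp [hF, Polynomial.aeval_comp, h2]
  have hY : (1 : MvPolynomial (Fin d) ℝ).IsHomogeneous 0 := isHomogeneous_one _ _
  have hd' : ∀ s, F.derivative.eval s = 2 * QJ N 0 ((d : ℝ) / 2) s := by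
    intro s
    rw [← jacobi_eval]
    simp [hF, qPoly, Polynomial.derivative_comp, polyAntideriv_deriv]
  rw [e, energy hd F hY]
  have z1 : ∀ y : sphere (0 : Edim d) 1, pEval (∑ i, pderiv i (1 : MvPolynomial (Fin d) ℝ) ^ 2)
      (y : Edim d) = 0 := by
    intro y; simp [pEval]
  have z2 : ∀ y : sphere (0 : Edim d) 1, pEval ((1 : MvPolynomial (Fin d) ℝ) ^ 2)
      (y : Edim d) = 1 := by
    intro y; simp [pEval]
  simp only [z1, z2, sph_total hd, integral_zero, mul_zero, add_zero]
  congr 1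
  have h2 := hJ_norm N d
  have h3 : ∫ r in (0 : ℝ)..1, (4 * r ^ 2 * (F.derivative.eval (r ^ 2)) ^ 2 +
        4 * ((0 : ℕ) : ℝ) * F.eval (r ^ 2) * F.derivative.eval (r ^ 2)) * r ^ (0 + d - 1) =
      16 * ∫ r in (0 : ℝ)..1, r ^ (d + 1) * QJ N 0 ((d : ℝ) / 2) (r ^ 2) ^ 2 := by
    rw [← intervalIntegral.integral_const_mul]
    congr 1
    funext r
    rw [hd', show d + 1 = (0 + d - 1) + 2 by omega]
    push_cast
    ring
  rw [h3, h2]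
  have hden : (0 : ℝ) < 2 * N + 1 + (d : ℝ) / 2 := by positivity
  have : 2 * (N : ℝ) + (d : ℝ) / 2 + 1 = 2 * N + 1 + (d : ℝ) / 2 := by ring
  rw [this]
  field_simp
  ring

/-- the `⟨·,·⟩_II`-norms of the polynomials `V_{j,ν}^n`: for
`1 ≤ j ≤ ⌊(n-1)/2⌋`, `⟨V_{j,ν}^n, V_{j,ν}^n⟩_II = ⟨U_{j,ν}^n, U_{j,ν}^n⟩_I
= 2j²λ/(n+(d-2)/2)`, and for `n ≥ 1` even, `⟨V_{n/2}^n, V_{n/2}^n⟩_II = 8λ/(n+(d-2)/2)`. -/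
theorem stmt11 (d : ℕ) (hd : 2 ≤ d) (lam : ℝ) (hlam : 0 < lam)
    (Y : (m : ℕ) → Fin (sigmaDim d m) → MvPolynomial (Fin d) ℝ)
    (hYhom : ∀ m ν, (Y m ν).IsHomogeneous m)
    (hYharm : ∀ m ν, mvLaplacian (Y m ν) = 0)
    (hYon : ∀ (m k : ℕ) (ν : Fin (sigmaDim d m)) (μ : Fin (sigmaDim d k)),
      (1 / omegaD d) * ∫ y : sphere (0 : Edim d) 1,
          pEval (Y m ν) y * pEval (Y k μ) y ∂(sphMeasure d) =
        if m = k ∧ (ν : ℕ) = (μ : ℕ) then 1 else 0)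
    :
    (∀ (n j : ℕ), 1 ≤ j → 2 * j < n → ∀ (ν : Fin (sigmaDim d (n - 2 * j))),
      innerII d lam (pEval (Vpoly d Y n j ν)) (pEval (Vpoly d Y n j ν)) =
          innerI d lam (pEval (Upoly d Y n j ν)) (pEval (Upoly d Y n j ν)) ∧
        innerII d lam (pEval (Vpoly d Y n j ν)) (pEval (Vpoly d Y n j ν)) =
          2 * (j : ℝ) ^ 2 * lam / ((n : ℝ) + ((d : ℝ) - 2) / 2)) ∧
    (∀ n : ℕ, 1 ≤ n → Even n → ∀ (ν : Fin (sigmaDim d (n - 2 * (n / 2)))),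
      innerII d lam (pEval (Vpoly d Y n (n / 2) ν)) (pEval (Vpoly d Y n (n / 2) ν)) =
        8 * lam / ((n : ℝ) + ((d : ℝ) - 2) / 2)) := by
  have hω := omegaD_pos hd
  refine ⟨?_, ?_⟩
  · intro n j hj hjn ν
    obtain ⟨N, rfl⟩ : ∃ N, j = N + 1 := ⟨j - 1, by omega⟩
    have hV : Vpoly d Y n (N + 1) ν = Upoly d Y n (N + 1) ν := by
      unfold Vpoly
      rw [if_neg (by omega)]
    rw [hV, Upoly_eq]
    obtain ⟨m, hm⟩ : ∃ m, m = n - 2 * (N + 1) := ⟨_, rfl⟩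
    have hm1 : 1 ≤ m := by omega
    have hn : n = m + 2 * (N + 1) := by omega
    have hnr : (n : ℝ) = m + 2 * (N + 1) := by exact_mod_cast hn
    have hh := hYhom (n - 2 * (N + 1)) ν
    have hL := hYharm (n - 2 * (N + 1)) ν
    have ho := hYon _ _ ν ν
    generalize Y (n - 2 * (N + 1)) ν = Z at hh hL ho ⊢
    rw [← hm] at hh
    have hon : ∫ y : sphere (0 : Edim d) 1, pEval (Z ^ 2) y ∂(sphMeasure d) = omegaD d := by
      simp only [and_self, if_true] at ho
      simp only [sq, pEval_mul]
      rw [one_div, inv_mul_eq_iff_eq_mul₀ hω.ne', mul_one] at ho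
      exact ho
    set b : ℝ := (n : ℝ) - 2 * ((N + 1 : ℕ) : ℝ) + ((d : ℝ) - 2) / 2 with hb
    have hE := energyU (N := N) hd hm1 hh hL hon b (by rw [hb, hnr]; push_cast; ring)
    have h0 : pEval (Polynomial.aeval (sumSq d) (radU N b) * Z) (0 : Edim d) = 0 := by
      have := pEval_smul hh 0 (0 : Edim d)
      rw [zero_smul, zero_pow (by omega), zero_mul] at this
      rw [pEval_mul, this, mul_zero]
    have hS : ∀ y : sphere (0 : Edim d) 1,
        pEval (Polynomial.aeval (sumSq d) (radU N b) * Z) (y : Edim d) = 0 := by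
      intro y
      have hy : ‖(y : Edim d)‖ = 1 := by simp
      rw [pEval_mul, pEval_aeval, pEval_sumSq, hy, radU_eval]
      ring
    have hII : innerII d lam (pEval (Polynomial.aeval (sumSq d) (radU N b) * Z))
        (pEval (Polynomial.aeval (sumSq d) (radU N b) * Z)) =
        2 * ((N + 1 : ℕ) : ℝ) ^ 2 * lam / ((n : ℝ) + ((d : ℝ) - 2) / 2) := by
      unfold innerII
      simp only [h0, mul_zero, add_zero]
      rw [hE, hnr]
      have hden : (0 : ℝ) < 2 * N + m + 1 + (d : ℝ) / 2 := by positivity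
      rw [show (m : ℝ) + 2 * (N + 1) + ((d : ℝ) - 2) / 2 = 2 * N + m + 1 + (d : ℝ) / 2 by ring]
      push_cast
      field_simp
    refine ⟨?_, hII⟩
    unfold innerI innerII
    simp only [hS, h0]
    simp
  · intro n hn hev ν
    obtain ⟨k, hk⟩ := hev
    obtain ⟨N, hN⟩ : ∃ N, n / 2 = N + 1 := ⟨n / 2 - 1, by omega⟩
    have hnr : (n : ℝ) = 2 * (N + 1) := by
      have : n = 2 * (N + 1) := by omega
      exact_mod_cast this
    have hV : Vpoly d Y n (n / 2) ν =
        Polynomial.aeval (2 * sumSq d - 1) (qPoly d (N + 1)) := by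
      unfold Vpoly
      rw [if_pos (by omega), hN]
    rw [hV]
    have h0 : pEval (Polynomial.aeval (2 * sumSq d - 1) (qPoly d (N + 1))) (0 : Edim d) = 0 := by
      rw [pEval_aeval]
      have : pEval (2 * sumSq d - 1) (0 : Edim d) = -1 := by
        simp [pEval, sumSq]
      rw [this]
      simp [qPoly]
    unfold innerII
    simp only [h0, mul_zero, add_zero]
    rw [energyV hd, hnr]
    have hden : (0 : ℝ) < 2 * N + 1 + (d : ℝ) / 2 := by positivity
    rw [show 2 * ((N : ℝ) + 1) + ((d : ℝ) - 2) / 2 = 2 * N + 1 + (d : ℝ) / 2 by ring]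
    field_simp
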